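/- Let μ ∈ (0,∞) be fixed and let F_T, F_A be probability distributions on [0,∞) (the distributions of nonnegative random variables T and A). Then the conditions 0 ≤ E[T] < 1, E[A] = 1 and E[A²] < ∞ hold if and only if the functional equation F̂(s) = ∫₀^∞ exp(−a·σ(s)) dF_A(a) for all s ≥ 0 has exactly one solution: a probability distribution F on [0,∞) with mean μ and finite second moment (here σ is built from the unknown F, F_T and μ). Moreover, the unique solution F satisfies Var[F] = ((Var[A] + E[T])/(1 − E[T]))·μ². -/

import Mathlib

/-!
The functional equation is read as a fixed-point equation for `φ = LS F`. Laplace transforms are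
recognised not by complete monotonicity but by the property `LaplacePos`: the rule `e^{-s x} ↦ φ s`
is a positive functional on the span of the exponentials on `[0,∞)`.

* This property passes to products, mixtures, dilations `φ (t ·)` and pointwise limits. Since `σ` is
  a mixture of the functions `(1 - φ (t ·)) / t`, which are (limits of) compound Poisson exponents,
  `e^{-a σ}` has it whenever `φ` does (`Admissible.exp_sigma`). So the right-hand side `mixOp` of the
  equation maps the class `Admissible` to itself.
* Conversely, a function with this property, equal to `1` at `0` and bounded below by `1 - μ s`, is
  the Laplace transform of a probability distribution (`LaplacePos.exists_LS`): after the
  substitution `y = e^{-x}` one extends the positive functional to `C([0,1])` (M. Riesz) and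
  represents it by a measure (Riesz–Markov–Kakutani).
* Two Laplace transforms of distributions with the same mean `μ` and finite second moments differ by
  at most `C s²`. In the distance `sup |φ s - ψ s| / s²` the operator `mixOp` is Lipschitz with
  constant `E[T]`, because `E[A] = 1` and `|(φ (t s) - ψ (t s)) / t| ≤ C t s²`. Under the moment
  conditions this is a contraction, which gives uniqueness; iterating from `e^{-μ s}` gives
  existence, a bound `φ s ≤ 1 - μ s + C s²` being preserved along the way, so that the limit
  distribution has mean `μ` and finite second moment.
* For the converse and for the variance, any solution is expanded at `s = 0`
  (`Sol.moment_equations`). The difference quotients converge from below, so by Fatou's lemma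
  their integrals in `[0,∞]` converge without moment assumptions. This gives `E[A] = 1` at first
  order and `m = E[T] m + μ² E[A²]` at second order, where `m` is the second moment of the
  solution. As `0 < m < ∞` and `E[A²] > 0`, this forces `E[A²] < ∞` and `E[T] < 1`; and
  solving it for `m` gives the variance. In particular the existence of a solution alone implies the
  moment conditions.
-/

open MeasureTheory

/-- Laplace–Stieltjes transform of a (nonnegative) probability distribution. -/
noncomputable def LS (F : Measure ℝ) (s : ℝ) : ℝ := ∫ x, Real.exp (-(s * x)) ∂F

/-- `σ(s) = ∫₀^∞ (1 − F̂(ts))/t dF_T(t)`, with the integrand at `t = 0` equal to `μ s`. -/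
noncomputable def sigmaT (F FT : Measure ℝ) (μ : ℝ) (s : ℝ) : ℝ :=
  ∫ t, (if t = 0 then μ * s else (1 - LS F (t * s)) / t) ∂FT

/-- The moment conditions: `E[T] < 1`, `E[A] = 1`, `E[A²] < ∞`. -/
def Cond (FT FA : Measure ℝ) : Prop :=
  (∫⁻ t, ENNReal.ofReal t ∂FT) < 1 ∧ (∫⁻ a, ENNReal.ofReal a ∂FA) = 1 ∧
  (∫⁻ a, ENNReal.ofReal (a ^ 2) ∂FA) < ⊤

/-- `F` is a solution: a probability distribution on `[0,∞)` with mean `μ`, finite second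
moment, satisfying `F̂(s) = ∫₀^∞ exp(−a σ(s)) dF_A(a)` for all `s ≥ 0`. -/
def Sol (FT FA : Measure ℝ) (μ : ℝ) (F : Measure ℝ) : Prop :=
  IsProbabilityMeasure F ∧ F (Set.Iio 0) = 0 ∧ (∫ x, x ∂F) = μ ∧
  Integrable (fun x => x ^ 2) F ∧
  ∀ s : ℝ, 0 ≤ s → LS F s = ∫ a, Real.exp (-(a * sigmaT F FT μ s)) ∂FA

section
open Filter Topology

/-! ### Laplace-positive functions -/

/-- The positivity property characterising Laplace transforms of measures on `[0,∞)`: every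
finite combination of exponentials `x ↦ e^{-s x}` that is nonnegative on `[0,∞)` is mapped to a
nonnegative number by the linear rule `e^{-s x} ↦ φ s`. Only the values of `φ` on `[0,∞)` matter. -/
def LaplacePos (φ : ℝ → ℝ) : Prop :=
  ∀ (ι : Type) [Fintype ι] (c s : ι → ℝ), (∀ i, 0 ≤ s i) →
    (∀ x, 0 ≤ x → 0 ≤ ∑ i, c i * Real.exp (-(s i * x))) → 0 ≤ ∑ i, c i * φ (s i)

namespace LaplacePos

variable {φ ψ : ℝ → ℝ}

lemma expo {a : ℝ} (ha : 0 ≤ a) : LaplacePos (fun s => Real.exp (-(s * a))) :=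
  fun _ _ _ _ _ h => h a ha

lemma congr (hφ : LaplacePos φ) (h : ∀ s, 0 ≤ s → φ s = ψ s) : LaplacePos ψ := by
  intro ι _ c s hs hc
  simpa only [h _ (hs _)] using hφ ι c s hs hc

lemma one : LaplacePos (fun _ => 1) := (expo le_rfl).congr (by simp)

lemma comp_mul (hφ : LaplacePos φ) {t : ℝ} (ht : 0 ≤ t) : LaplacePos (fun s => φ (t * s)) := by
  intro ι _ c s hs hc
  refine hφ ι c (fun i => t * s i) (fun i => mul_nonneg ht (hs i)) fun x hx => ?_
  refine (hc (t * x) (mul_nonneg ht hx)).trans_eq (Finset.sum_congr rfl fun i _ => ?_)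
  ring_nf

lemma add (hφ : LaplacePos φ) (hψ : LaplacePos ψ) : LaplacePos (fun s => φ s + ψ s) := by
  intro ι _ c s hs hc
  simpa [mul_add, Finset.sum_add_distrib] using add_nonneg (hφ ι c s hs hc) (hψ ι c s hs hc)

lemma const_mul (hφ : LaplacePos φ) {r : ℝ} (hr : 0 ≤ r) : LaplacePos (fun s => r * φ s) := by
  intro ι _ c s hs hc
  refine (mul_nonneg hr (hφ ι c s hs hc)).trans_eq ?_
  rw [Finset.mul_sum]
  exact Finset.sum_congr rfl fun i _ => by ring

/-- The analogue of convolution: the nonnegativity of `∑ cᵢ e^{-sᵢ(x+y)}` is used for `ψ` with the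
coefficients `cᵢ e^{-sᵢ x}`, and then for `φ` with the coefficients `cᵢ ψ(sᵢ)`. -/
lemma mul (hφ : LaplacePos φ) (hψ : LaplacePos ψ) : LaplacePos (fun s => φ s * ψ s) := by
  intro ι _ c s hs hc
  have h1 : ∀ x, 0 ≤ x → 0 ≤ ∑ i, (c i * ψ (s i)) * Real.exp (-(s i * x)) := by
    intro x hx
    have := hψ ι (fun i => c i * Real.exp (-(s i * x))) s hs (fun y hy => by
      refine (hc (x + y) (add_nonneg hx hy)).trans_eq (Finset.sum_congr rfl fun i _ => ?_)
      rw [mul_assoc, ← Real.exp_add]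
      ring_nf)
    exact this.trans_eq (Finset.sum_congr rfl fun i _ => by ring)
  exact (hφ ι _ s hs h1).trans_eq (Finset.sum_congr rfl fun i _ => by ring)

lemma pow (hφ : LaplacePos φ) (n : ℕ) : LaplacePos (fun s => φ s ^ n) := by
  induction n with
  | zero => simpa using one
  | succ n ih => simpa [pow_succ] using ih.mul hφ

lemma of_tendsto {f : ℕ → ℝ → ℝ} (hf : ∀ᶠ n in atTop, LaplacePos (f n))
    (h : ∀ s, 0 ≤ s → Tendsto (fun n => f n s) atTop (𝓝 (φ s))) : LaplacePos φ := by
  intro ι _ c s hs hc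
  have : Tendsto (fun n => ∑ i, c i * f n (s i)) atTop (𝓝 (∑ i, c i * φ (s i))) :=
    tendsto_finsetSum _ fun i _ => (h _ (hs i)).const_mul _
  exact ge_of_tendsto this (hf.mono fun n hn => hn ι c s hs hc)

lemma integral {α : Type*} [MeasurableSpace α] {P : Measure α} {f : α → ℝ → ℝ}
    (hf : ∀ᵐ t ∂P, LaplacePos (f t)) (hi : ∀ s, 0 ≤ s → Integrable (fun t => f t s) P) :
    LaplacePos (fun s => ∫ t, f t s ∂P) := by
  intro ι _ c s hs hc
  simp_rw [← integral_const_mul]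
  rw [← integral_finsetSum _ fun i _ => (hi _ (hs i)).const_mul _]
  exact integral_nonneg_of_ae (hf.mono fun t ht => ht ι c s hs hc)

lemma nonneg (hφ : LaplacePos φ) {s : ℝ} (hs : 0 ≤ s) : 0 ≤ φ s := by
  simpa using hφ Unit (fun _ => 1) (fun _ => s) (fun _ => hs)
    (fun x _ => by simpa using (Real.exp_pos _).le)

lemma anti (hφ : LaplacePos φ) {s t : ℝ} (hs : 0 ≤ s) (hst : s ≤ t) : φ t ≤ φ s := by
  have := hφ Bool (fun b => if b then 1 else -1) (fun b => if b then s else t)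
    (fun b => by cases b <;> simp <;> linarith) (fun x hx => by
      simp only [Fintype.sum_bool, if_true]
      have : Real.exp (-(t * x)) ≤ Real.exp (-(s * x)) :=
        Real.exp_le_exp.2 (by nlinarith)
      simpa using this)
  simpa using this

end LaplacePos

/-! ### Laplace-positive functions are Laplace transforms -/

section
open scoped unitInterval NNReal CompactlySupported

/-- The function `y ↦ y ^ s` on `[0,1]`, with `0 ^ 0 = 1`. Under the substitution `y = e^{-x}` it is
the exponential `x ↦ e^{-s x}`, extended to `x = ∞`. -/
noncomputable def powI (s : ℝ≥0) : C_c(I, ℝ) :=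
  CompactlySupportedContinuousMap.continuousMapEquiv
    ⟨fun y => (y : ℝ) ^ (s : ℝ), by
      exact (Real.continuous_rpow_const s.2).comp continuous_subtype_val⟩

lemma powI_apply (s : ℝ≥0) (y : I) : powI s y = (y : ℝ) ^ (s : ℝ) := rfl

lemma linearCombination_powI_apply (c : ℝ≥0 →₀ ℝ) (y : I) :
    (Finsupp.linearCombination ℝ powI c) y = ∑ s ∈ c.support, c s * (y : ℝ) ^ (s : ℝ) := by
  rw [Finsupp.linearCombination_apply, Finsupp.sum, CompactlySupportedContinuousMap.sum_apply]
  simp [powI_apply]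

/-- Positivity of `φ`, transported to the span of the functions `powI s`. -/
lemma LaplacePos.nonneg_of_powI {φ : ℝ → ℝ} (hφ : LaplacePos φ) (c : ℝ≥0 →₀ ℝ)
    (h : 0 ≤ Finsupp.linearCombination ℝ powI c) :
    0 ≤ Finsupp.linearCombination ℝ (fun s : ℝ≥0 => φ s) c := by
  have := hφ c.support (fun s => c s) (fun s => ((s : ℝ≥0) : ℝ)) (fun s => s.1.2) fun x hx => by
    have h1 := h ⟨Real.exp (-x), (Real.exp_pos _).le, by simpa using hx⟩
    rw [linearCombination_powI_apply] at h1
    refine le_of_le_of_eq h1 ?_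
    rw [← Finset.sum_coe_sort c.support]
    refine Finset.sum_congr rfl fun s _ => ?_
    rw [← Real.exp_mul]
    ring_nf
  rw [Finset.sum_coe_sort c.support (fun s : ℝ≥0 => c s * φ s)] at this
  simpa [Finsupp.linearCombination_apply, Finsupp.sum] using this

/-- The functional `powI s ↦ φ s` on the span of the `powI s` extends to a positive functional on
all continuous functions by M. Riesz's extension theorem; the Riesz–Markov–Kakutani theorem
represents the latter by a measure. -/
lemma LaplacePos.exists_measure_I {φ : ℝ → ℝ} (hφ : LaplacePos φ) (h0 : φ 0 = 1) :
    ∃ ν : Measure I, IsProbabilityMeasure ν ∧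
      ∀ s : ℝ≥0, ∫ y, (y : ℝ) ^ (s : ℝ) ∂ν = φ s := by
  set L := Finsupp.linearCombination ℝ powI with hL
  set Λ := Finsupp.linearCombination ℝ (fun s : ℝ≥0 => φ s) with hΛ
  have hker : ∀ c, L c = 0 → Λ c = 0 := by
    intro c hc
    refine le_antisymm ?_ (hφ.nonneg_of_powI c hc.ge)
    have := hφ.nonneg_of_powI (-c) (by rw [map_neg]; simp [← hL, hc])
    rw [map_neg] at this
    linarith
  have hmem : Λ ∈ LinearMap.range L.dualMap := by
    rw [LinearMap.range_dualMap_eq_dualAnnihilator_ker, Submodule.mem_dualAnnihilator]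
    exact fun c hc => hker c hc
  obtain ⟨g0, hg0⟩ := hmem
  have hg0' : ∀ c, g0 (L c) = Λ c := fun c => by rw [← hg0]; rfl
  let f : C_c(I, ℝ) →ₗ.[ℝ] ℝ := ⟨LinearMap.range L, g0.domRestrict (LinearMap.range L)⟩
  have hpow : ∀ s, L (Finsupp.single s 1) = powI s := fun s => by simp [hL]
  let K : PointedCone ℝ C_c(I, ℝ) :=
    { carrier := {f | 0 ≤ f}
      add_mem' := fun hf hg x => add_nonneg (hf x) (hg x)
      zero_mem' := fun _ => le_rfl
      smul_mem' := fun r _ hf x => mul_nonneg r.2 (hf x) }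
  obtain ⟨g, hgf, hgpos⟩ := riesz_extension K f
    (by
      rintro ⟨x, c, rfl⟩ hx
      have : f ⟨L c, c, rfl⟩ = Λ c := hg0' c
      rw [this]
      exact hφ.nonneg_of_powI c hx)
    (by
      intro y
      obtain ⟨C, hC⟩ := (isCompact_range y.continuous).bddBelow
      refine ⟨⟨L (Finsupp.single 0 (-C)), _, rfl⟩, ?_⟩
      intro x
      have : C ≤ y x := hC ⟨x, rfl⟩
      have h1 : (L (Finsupp.single 0 (-C))) x = -C := by
        simp [hL, powI_apply]
      change 0 ≤ (L (Finsupp.single 0 (-C))) x + y x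
      rw [h1]
      linarith)
  have hgs : ∀ s, g (powI s) = φ s := by
    intro s
    have := hgf ⟨powI s, Finsupp.single s 1, hpow s⟩
    rw [this]
    change g0 (powI s) = φ s
    rw [← hpow, hg0']
    simp [hΛ]
  let G : C_c(I, ℝ) →ₚ[ℝ] ℝ := PositiveLinearMap.mk₀ g hgpos
  have hint : ∀ s : ℝ≥0, ∫ y, (y : ℝ) ^ (s : ℝ) ∂(RealRMK.rieszMeasure G) = φ s := by
    intro s
    rw [← hgs s]
    exact RealRMK.integral_rieszMeasure G (powI s)
  refine ⟨RealRMK.rieszMeasure G, ⟨?_⟩, hint⟩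
  have h1 := hint 0
  simp only [NNReal.coe_zero, Real.rpow_zero, h0] at h1
  rw [integral_const, smul_eq_mul, mul_one, measureReal_def] at h1
  exact (ENNReal.toReal_eq_one_iff _).1 h1

/-- A Laplace-positive function that is `1` at `0` and continuous there is the Laplace transform of
a probability distribution on `[0,∞)`: continuity at `0` excludes mass at `y = 0`, that is, at
`x = ∞`. -/
lemma LaplacePos.exists_LS {φ : ℝ → ℝ} {μ : ℝ} (hφ : LaplacePos φ) (h0 : φ 0 = 1)
    (hlow : ∀ s, 0 ≤ s → 1 - μ * s ≤ φ s) :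
    ∃ F : Measure ℝ, IsProbabilityMeasure F ∧ F (Set.Iio 0) = 0 ∧
      ∀ s, 0 ≤ s → LS F s = φ s := by
  obtain ⟨ν, hν, hνs⟩ := hφ.exists_measure_I h0
  have hmeas : Measurable fun y : I => -Real.log (y : ℝ) :=
    (Real.measurable_log.comp measurable_subtype_coe).neg
  have hpos : ∀ᵐ y : I ∂ν, (0 : ℝ) < (y : ℝ) := by
    have hb : ∀ s : ℝ, 0 < s → ν.real {0} ≤ μ * s := by
      intro s hs
      have h1 : ∫ y : I, (y : ℝ) ^ s ∂ν ≤
          ∫ y : I, (1 - Set.indicator {0} (fun _ => (1 : ℝ)) y) ∂ν := by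
        refine integral_mono_of_nonneg (.of_forall fun y => Real.rpow_nonneg y.2.1 _)
          ((integrable_const _).sub ((integrable_const _).indicator (measurableSet_singleton _)))
          (.of_forall fun y => ?_)
        by_cases hy : y = 0
        · simp [hy, hs.ne']
        · simpa [hy] using Real.rpow_le_one y.2.1 y.2.2 hs.le
      rw [integral_sub (integrable_const _)
        ((integrable_const _).indicator (measurableSet_singleton _)),
        integral_indicator (measurableSet_singleton _)] at h1
      have h2 : ∫ y : I, (y : ℝ) ^ s ∂ν = φ s := hνs ⟨s, hs.le⟩
      rw [h2] at h1
      have h3 := hlow s hs.le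
      simp at h1
      rw [← measureReal_def] at h1
      linarith
    have h0' : ν.real {0} ≤ 0 := by
      have : Tendsto (fun s : ℝ => μ * s) (𝓝[>] 0) (𝓝 (μ * 0)) :=
        (tendsto_id.const_mul μ).mono_left nhdsWithin_le_nhds
      rw [mul_zero] at this
      exact ge_of_tendsto this (eventually_mem_nhdsWithin.mono fun s hs => hb s hs)
    have h00 : ν {0} = 0 :=
      (measureReal_eq_zero_iff).1 (le_antisymm h0' measureReal_nonneg)
    have : ∀ᵐ y ∂ν, y ∉ ({0} : Set I) := measure_eq_zero_iff_ae_notMem.1 h00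
    filter_upwards [this] with y hy
    exact lt_of_le_of_ne y.2.1 fun h => hy (Subtype.ext h.symm)
  refine ⟨ν.map fun y : I => -Real.log (y : ℝ), Measure.isProbabilityMeasure_map hmeas.aemeasurable,
    ?_, fun s hs => ?_⟩
  · rw [Measure.map_apply hmeas measurableSet_Iio]
    convert measure_empty (μ := ν)
    ext y
    simpa using Real.log_nonpos y.2.1 y.2.2
  · rw [LS, integral_map hmeas.aemeasurable (by fun_prop)]
    rw [← NNReal.coe_mk s hs, ← hνs]
    refine integral_congr_ae (hpos.mono fun y hy => ?_)
    simp only [NNReal.coe_mk]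
    rw [Real.rpow_def_of_pos hy]
    congr 1
    ring

end

/-! ### Uniqueness of Laplace transforms -/

section
open scoped unitInterval NNReal

lemma ae_nonneg_of_Iio {F : Measure ℝ} (hF : F (Set.Iio 0) = 0) : ∀ᵐ x ∂F, 0 ≤ x := by
  filter_upwards [measure_eq_zero_iff_ae_notMem.1 hF] with x hx
  simpa using hx

/-- The change of variables `x ↦ e^{-x}` (with negative `x` sent to `1`). -/
noncomputable def expI (x : ℝ) : I :=
  ⟨Real.exp (-(max x 0)), (Real.exp_pos _).le, by simp⟩

lemma measurable_expI : Measurable expI :=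
  Measurable.subtype_mk (by fun_prop)

lemma map_log_map_expI {F : Measure ℝ} (hF : F (Set.Iio 0) = 0) :
    (F.map expI).map (fun y : I => -Real.log (y : ℝ)) = F := by
  have hmeas : Measurable fun y : I => -Real.log (y : ℝ) :=
    (Real.measurable_log.comp measurable_subtype_coe).neg
  rw [Measure.map_map hmeas measurable_expI]
  conv_rhs => rw [← Measure.map_id (μ := F)]
  refine Measure.map_congr ?_
  filter_upwards [ae_nonneg_of_Iio hF] with x hx
  simp [expI, hx]

/-- A finite measure on `[0,∞)` is determined by its Laplace transform: the values at the natural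
numbers are the moments of the image on `[0,1]` under `x ↦ e^{-x}`, and polynomials are dense. -/
lemma eq_of_LS_eq {F G : Measure ℝ} [IsFiniteMeasure F] [IsFiniteMeasure G]
    (hF : F (Set.Iio 0) = 0) (hG : G (Set.Iio 0) = 0) (h : ∀ s, 0 ≤ s → LS F s = LS G s) :
    F = G := by
  have hpow : ∀ {H : Measure ℝ} [IsFiniteMeasure H], H (Set.Iio 0) = 0 → ∀ n : ℕ,
      ∫ y, (y : ℝ) ^ n ∂(H.map expI) = LS H n := by
    intro H _ hH n
    rw [integral_map measurable_expI.aemeasurable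
      (by exact (measurable_subtype_coe.pow_const n).aestronglyMeasurable), LS]
    refine integral_congr_ae ?_
    filter_upwards [ae_nonneg_of_Iio hH] with x hx
    simp [expI, hx, ← Real.exp_nat_mul]
  have hI : ∀ (ν : Measure I) [IsFiniteMeasure ν] (f : C(I, ℝ)), Integrable f ν := fun ν _ f =>
    f.continuous.integrable_of_hasCompactSupport (HasCompactSupport.of_compactSpace f)
  have hcont : ∀ (ν : Measure I) [IsFiniteMeasure ν],
      Continuous fun f : C(I, ℝ) => ∫ y, f y ∂ν := by
    intro ν _
    refine (LipschitzWith.of_dist_le_mul (K := ⟨ν.real Set.univ, measureReal_nonneg⟩)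
      fun f g => ?_).continuous
    rw [Real.dist_eq, ← integral_sub (hI ν f) (hI ν g), ← Real.norm_eq_abs]
    refine (norm_integral_le_of_norm_le_const (C := dist f g) (.of_forall fun y => ?_)).trans_eq ?_
    · rw [← dist_eq_norm]; exact ContinuousMap.dist_apply_le_dist y
    · rw [mul_comm]; rfl
  have hF' : IsFiniteMeasure (F.map expI) := inferInstance
  have hG' : IsFiniteMeasure (G.map expI) := inferInstance
  have hdense : ∀ f : C(I, ℝ), ∫ y, f y ∂(F.map expI) = ∫ y, f y ∂(G.map expI) := by
    intro f
    have hclosed : IsClosed {f : C(I, ℝ) | ∫ y, f y ∂(F.map expI) = ∫ y, f y ∂(G.map expI)} :=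
      isClosed_eq (hcont _) (hcont _)
    have hf : f ∈ (polynomialFunctions I).topologicalClosure := by
      rw [polynomialFunctions_closure_eq_top']; trivial
    refine closure_minimal ?_ hclosed hf
    rintro _ ⟨p, -, rfl⟩
    have heval : ∀ y : I, (Polynomial.toContinuousMapOnAlgHom I p : C(I, ℝ)) y
        = ∑ n ∈ p.support, p.coeff n * (y : ℝ) ^ n := fun y => by
      simp [Polynomial.eval_eq_sum, Polynomial.sum]
    change ∫ y, (Polynomial.toContinuousMapOnAlgHom I p : C(I, ℝ)) y ∂_ =
      ∫ y, (Polynomial.toContinuousMapOnAlgHom I p : C(I, ℝ)) y ∂_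
    simp_rw [heval]
    have hint : ∀ (ν : Measure I) [IsFiniteMeasure ν] (n : ℕ), Integrable
        (fun y : I => p.coeff n * (y : ℝ) ^ n) ν := fun ν _ n =>
      hI ν ⟨fun y : I => p.coeff n * (y : ℝ) ^ n, by fun_prop⟩
    rw [integral_finsetSum _ fun n _ => hint _ n, integral_finsetSum _ fun n _ => hint _ n]
    refine Finset.sum_congr rfl fun n _ => ?_
    rw [integral_const_mul, integral_const_mul, hpow hF, hpow hG, h _ n.cast_nonneg]
  have hmap : F.map expI = G.map expI :=
    ext_of_forall_integral_eq_of_IsFiniteMeasure fun f => hdense f.toContinuousMap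
  rw [← map_log_map_expI hF, hmap, map_log_map_expI hG]

end

/-! ### The operator of the functional equation -/

/-- The map `σ` of `sigmaT`, for an arbitrary function `φ` in place of a Laplace transform. -/
noncomputable def sigmaFun (FT : Measure ℝ) (μ : ℝ) (φ : ℝ → ℝ) (s : ℝ) : ℝ :=
  ∫ t, (if t = 0 then μ * s else (1 - φ (t * s)) / t) ∂FT

/-- The right-hand side of the functional equation as an operator on functions. -/
noncomputable def mixOp (FT FA : Measure ℝ) (μ : ℝ) (φ : ℝ → ℝ) (s : ℝ) : ℝ :=
  ∫ a, Real.exp (-(a * sigmaFun FT μ φ s)) ∂FA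

/-- The class on which the functional equation is iterated: Laplace-positive functions with
`φ 0 = 1` and `φ s ≥ 1 - μ s`, that is, Laplace transforms of distributions with mean at
most `μ`. -/
structure Admissible (μ : ℝ) (φ : ℝ → ℝ) : Prop where
  pos : LaplacePos φ
  zero : φ 0 = 1
  low : ∀ s, 0 ≤ s → 1 - μ * s ≤ φ s

section
variable {μ : ℝ} {φ ψ : ℝ → ℝ} {FT FA : Measure ℝ}

lemma Admissible.le_one (hφ : Admissible μ φ) {s : ℝ} (hs : 0 ≤ s) : φ s ≤ 1 :=
  (hφ.pos.anti le_rfl hs).trans_eq hφ.zero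

/-- Measurability in `t` comes from monotonicity. -/
lemma LaplacePos.aemeasurable_comp (hφ : LaplacePos φ) (hT : ∀ᵐ t ∂FT, 0 ≤ t) {s : ℝ}
    (hs : 0 ≤ s) : AEMeasurable (fun t => φ (t * s)) FT := by
  have : Antitone fun t : ℝ => φ (max t 0 * s) := fun t u htu =>
    hφ.anti (by positivity) (mul_le_mul_of_nonneg_right (max_le_max_right 0 htu) hs)
  refine ⟨_, this.measurable, ?_⟩
  filter_upwards [hT] with t ht
  rw [max_eq_left ht]

lemma LaplacePos.aemeasurable_kernel (hφ : LaplacePos φ) (hT : ∀ᵐ t ∂FT, 0 ≤ t) {s : ℝ}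
    (hs : 0 ≤ s) (c : ℝ) {w : ℝ → ℝ} (hw : Measurable w) :
    AEMeasurable (fun t => if t = 0 then c else (1 - φ (t * s)) / w t) FT := by
  obtain ⟨g, hg, hfg⟩ := hφ.aemeasurable_comp hT hs
  refine ⟨fun t => if t = 0 then c else (1 - g t) / w t,
    Measurable.ite (measurableSet_singleton 0) measurable_const ((hg.const_sub 1).div hw), ?_⟩
  filter_upwards [hfg] with t ht
  rw [ht]

lemma Admissible.kernel_mem (hμ : 0 ≤ μ) (hφ : Admissible μ φ) {s t : ℝ} (hs : 0 ≤ s) (ht : 0 ≤ t) :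
    0 ≤ (if t = 0 then μ * s else (1 - φ (t * s)) / t) ∧
      (if t = 0 then μ * s else (1 - φ (t * s)) / t) ≤ μ * s := by
  have h1 := hφ.le_one (mul_nonneg ht hs)
  have h2 := hφ.low _ (mul_nonneg ht hs)
  split_ifs with h
  · exact ⟨by positivity, le_rfl⟩
  · have ht' : 0 < t := lt_of_le_of_ne ht (Ne.symm h)
    refine ⟨div_nonneg (by linarith) ht, ?_⟩
    rw [div_le_iff₀ ht']
    linarith

lemma Admissible.integrable_kernel [IsProbabilityMeasure FT] (hμ : 0 ≤ μ) (hφ : Admissible μ φ)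
    (hT : ∀ᵐ t ∂FT, 0 ≤ t) {s : ℝ} (hs : 0 ≤ s) :
    Integrable (fun t => if t = 0 then μ * s else (1 - φ (t * s)) / t) FT := by
  refine Integrable.of_bound
    (hφ.pos.aemeasurable_kernel hT hs _ measurable_id).aestronglyMeasurable (μ * s) ?_
  filter_upwards [hT] with t ht
  have := hφ.kernel_mem hμ hs ht
  rw [Real.norm_eq_abs, abs_of_nonneg this.1]
  exact this.2

lemma Admissible.sigma_nonneg (hμ : 0 ≤ μ) (hφ : Admissible μ φ)
    (hT : ∀ᵐ t ∂FT, 0 ≤ t) {s : ℝ} (hs : 0 ≤ s) : 0 ≤ sigmaFun FT μ φ s :=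
  integral_nonneg_of_ae (hT.mono fun _ ht => (hφ.kernel_mem hμ hs ht).1)

lemma Admissible.sigma_le [IsProbabilityMeasure FT] (hμ : 0 ≤ μ) (hφ : Admissible μ φ)
    (hT : ∀ᵐ t ∂FT, 0 ≤ t) {s : ℝ} (hs : 0 ≤ s) : sigmaFun FT μ φ s ≤ μ * s := by
  have := integral_mono_ae (hφ.integrable_kernel hμ hT hs) (integrable_const (μ * s))
    (hT.mono fun _ ht => (hφ.kernel_mem hμ hs ht).2)
  simpa [sigmaFun] using this

/-- `e^{-aσ}` is Laplace-positive, as the Laplace exponent `σ` is a limit of compound Poisson ones.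
Cutting `1 / t` off at `1 / δ` and replacing the drift `μ s` by `(1 - e^{-δ μ s}) / δ` gives an
exponent `σ_δ` for which `1 - ε σ_δ` is a mixture of Laplace-positive functions whenever `ε ≤ δ`,
and `e^{-a σ_δ} = lim (1 - (a / n) σ_δ)^n`. -/
lemma Admissible.exp_sigma [IsProbabilityMeasure FT] (hμ : 0 ≤ μ) (hφ : Admissible μ φ)
    (hT : ∀ᵐ t ∂FT, 0 ≤ t) {a : ℝ} (ha : 0 ≤ a) :
    LaplacePos (fun s => Real.exp (-(a * sigmaFun FT μ φ s))) := by
  let k : ℝ → ℝ → ℝ → ℝ := fun δ s t =>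
    if t = 0 then (1 - Real.exp (-((δ * s) * μ))) / δ else (1 - φ (t * s)) / max t δ
  have kmem : ∀ δ, 0 < δ → ∀ s, 0 ≤ s → ∀ t, 0 ≤ t → 0 ≤ k δ s t ∧ k δ s t ≤ μ * s := by
    intro δ hδ s hs t ht
    simp only [k]
    split_ifs with h
    · have h1 := Real.add_one_le_exp (-((δ * s) * μ))
      have h2 : Real.exp (-((δ * s) * μ)) ≤ 1 := Real.exp_le_one_iff.2 (by
        have : 0 ≤ (δ * s) * μ := by positivity
        linarith)
      refine ⟨div_nonneg (by linarith) hδ.le, ?_⟩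
      rw [div_le_iff₀ hδ]
      linarith
    · have h1 := hφ.le_one (mul_nonneg ht hs)
      have h2 := hφ.low _ (mul_nonneg ht hs)
      have hd : 0 < max t δ := lt_max_of_lt_right hδ
      refine ⟨div_nonneg (by linarith) hd.le, ?_⟩
      rw [div_le_iff₀ hd]
      have : μ * s * t ≤ μ * s * max t δ :=
        mul_le_mul_of_nonneg_left (le_max_left _ _) (by positivity)
      linarith
  have kmeas : ∀ δ s, 0 ≤ s → AEStronglyMeasurable (k δ s) FT := fun δ s hs =>
    (hφ.pos.aemeasurable_kernel hT hs _ (measurable_id.max measurable_const)).aestronglyMeasurable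
  have kint : ∀ δ, 0 < δ → ∀ s, 0 ≤ s → Integrable (k δ s) FT := by
    intro δ hδ s hs
    refine Integrable.of_bound (kmeas δ s hs) (μ * s) ?_
    filter_upwards [hT] with t ht
    rw [Real.norm_eq_abs, abs_of_nonneg (kmem δ hδ s hs t ht).1]
    exact (kmem δ hδ s hs t ht).2
  have affine : ∀ {χ : ℝ → ℝ}, LaplacePos χ → ∀ {r : ℝ}, 0 ≤ r → r ≤ 1 →
      LaplacePos (fun s => 1 - r * (1 - χ s)) := by
    intro χ hχ r h0 h1
    exact ((LaplacePos.one.const_mul (sub_nonneg.2 h1)).add (hχ.const_mul h0)).congr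
      fun s _ => by ring
  have step1 : ∀ δ, 0 < δ → ∀ ε, 0 ≤ ε → ε ≤ δ →
      LaplacePos (fun s => 1 - ε * ∫ t, k δ s t ∂FT) := by
    intro δ hδ ε hε hεδ
    have : LaplacePos (fun s => ∫ t, (1 - ε * k δ s t) ∂FT) := by
      refine LaplacePos.integral ?_ fun s hs =>
        (integrable_const _).sub ((kint δ hδ s hs).const_mul ε)
      filter_upwards [hT] with t ht
      by_cases h : t = 0
      · have h1 := affine ((LaplacePos.expo hμ).comp_mul hδ.le) (r := ε / δ) (by positivity)
          ((div_le_one hδ).2 hεδ)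
        refine h1.congr fun s _ => ?_
        simp only [k, h, if_true]
        ring
      · have hd : 0 < max t δ := lt_max_of_lt_right hδ
        have h1 := affine (hφ.pos.comp_mul ht) (r := ε / max t δ) (by positivity)
          ((div_le_one hd).2 (hεδ.trans (le_max_right _ _)))
        refine h1.congr fun s _ => ?_
        simp only [k, h, if_false]
        ring
    refine this.congr fun s hs => ?_
    rw [integral_sub (integrable_const _) ((kint δ hδ s hs).const_mul ε), integral_const_mul]
    simp
  have step2 : ∀ δ, 0 < δ → LaplacePos (fun s => Real.exp (-(a * ∫ t, k δ s t ∂FT))) := by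
    intro δ hδ
    refine LaplacePos.of_tendsto
      (f := fun (n : ℕ) s => (1 + -(a * ∫ t, k δ s t ∂FT) / n) ^ n) ?_
      fun s _ => Real.tendsto_one_add_div_pow_exp _
    obtain ⟨N, hN⟩ := exists_nat_ge (a / δ)
    filter_upwards [eventually_ge_atTop N, eventually_gt_atTop 0] with n hn hn0
    have hn0' : (0 : ℝ) < n := Nat.cast_pos.2 hn0
    have hle : a / n ≤ δ := by
      rw [div_le_iff₀ hn0', mul_comm, ← div_le_iff₀ hδ]
      exact hN.trans (Nat.cast_le.2 hn)
    refine ((step1 δ hδ (a / n) (by positivity) hle).pow n).congr fun s _ => ?_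
    congr 1
    ring
  refine LaplacePos.of_tendsto
    (f := fun (n : ℕ) s => Real.exp (-(a * ∫ t, k (1 / ((n : ℝ) + 1)) s t ∂FT)))
    (.of_forall fun n => step2 _ Nat.one_div_pos_of_nat) fun s hs => ?_
  refine (Real.continuous_exp.tendsto _).comp (Tendsto.neg (Tendsto.const_mul a ?_))
  have hδ0 : Tendsto (fun n : ℕ => 1 / ((n : ℝ) + 1)) atTop (𝓝 0) :=
    tendsto_one_div_add_atTop_nhds_zero_nat
  refine tendsto_integral_of_dominated_convergence (fun _ => μ * s)
    (fun n => kmeas _ s hs) (integrable_const _) (fun n => ?_) ?_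
  · filter_upwards [hT] with t ht
    have := kmem _ (Nat.one_div_pos_of_nat (n := n)) s hs t ht
    rw [Real.norm_eq_abs, abs_of_nonneg this.1]
    exact this.2
  · filter_upwards [hT] with t ht
    by_cases h : t = 0
    · simp only [k, h, if_true]
      -- the difference quotient at `0` of `u ↦ 1 - e^{-u s μ}`
      have hd : HasDerivAt (fun u : ℝ => 1 - Real.exp (-((u * s) * μ))) (μ * s) 0 := by
        have := ((((hasDerivAt_id (0 : ℝ)).mul_const s).mul_const μ).neg.exp).const_sub 1
        simpa [mul_comm] using this
      have hs := hd.tendsto_slope_zero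
      have := hs.comp (tendsto_nhdsWithin_iff.2 ⟨hδ0, .of_forall fun n => by
        exact (Nat.one_div_pos_of_nat (n := n)).ne'⟩)
      refine this.congr fun n => ?_
      simp [div_eq_inv_mul]
    · have ht' : 0 < t := lt_of_le_of_ne ht (Ne.symm h)
      simp only [k, h, if_false]
      refine tendsto_const_nhds.congr' ?_
      filter_upwards [hδ0.eventually (gt_mem_nhds ht')] with n hn
      rw [max_eq_left hn.le]

lemma integrable_exp_neg_mul [IsProbabilityMeasure FA] (hA : ∀ᵐ a ∂FA, 0 ≤ a) {r : ℝ}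
    (hr : 0 ≤ r) : Integrable (fun a => Real.exp (-(a * r))) FA := by
  refine Integrable.of_bound (by fun_prop) 1 ?_
  filter_upwards [hA] with a ha
  rw [Real.norm_eq_abs, Real.abs_exp, Real.exp_le_one_iff]
  nlinarith [mul_nonneg ha hr]

lemma Admissible.mixOp [IsProbabilityMeasure FT] [IsProbabilityMeasure FA] (hμ : 0 ≤ μ)
    (hφ : Admissible μ φ) (hT : ∀ᵐ t ∂FT, 0 ≤ t) (hA : ∀ᵐ a ∂FA, 0 ≤ a)
    (hAi : Integrable (fun a => a) FA) (hA1 : ∫ a, a ∂FA = 1) :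
    Admissible μ (mixOp FT FA μ φ) where
  pos := LaplacePos.integral (hA.mono fun _ ha => hφ.exp_sigma hμ hT ha) fun _ hs =>
    integrable_exp_neg_mul hA (hφ.sigma_nonneg hμ hT hs)
  zero := by
    have h0 := hφ.sigma_le hμ hT (le_refl 0)
    have h1 := hφ.sigma_nonneg hμ hT (le_refl 0)
    have : sigmaFun FT μ φ 0 = 0 := by linarith
    simp [_root_.mixOp, this]
  low s hs := by
    have h1 := integral_mono_ae ((integrable_const (1 : ℝ)).sub (hAi.mul_const (sigmaFun FT μ φ s)))
      (integrable_exp_neg_mul hA (hφ.sigma_nonneg hμ hT hs)) (.of_forall fun a => by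
        have := Real.add_one_le_exp (-(a * sigmaFun FT μ φ s))
        simp only [Pi.sub_apply]
        linarith)
    simp only [Pi.sub_apply] at h1
    rw [integral_sub (integrable_const (1 : ℝ)) (hAi.mul_const _), integral_mul_const, hA1] at h1
    have := hφ.sigma_le hμ hT hs
    simp at h1
    simp only [_root_.mixOp]
    linarith

lemma abs_exp_neg_sub_exp_neg_le {x y : ℝ} (hx : 0 ≤ x) (hy : 0 ≤ y) :
    |Real.exp (-x) - Real.exp (-y)| ≤ |x - y| := by
  wlog h : x ≤ y generalizing x y
  · rw [abs_sub_comm, abs_sub_comm x]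
    exact this hy hx (le_of_not_ge h)
  have h1 : Real.exp (-y) ≤ Real.exp (-x) := Real.exp_le_exp.2 (by linarith)
  rw [abs_of_nonneg (by linarith), abs_of_nonpos (by linarith)]
  have h2 : Real.exp (-y) = Real.exp (-x) * Real.exp (-(y - x)) := by
    rw [← Real.exp_add]; ring_nf
  have h3 := Real.add_one_le_exp (-(y - x))
  have h4 : Real.exp (-x) ≤ 1 := Real.exp_le_one_iff.2 (by linarith)
  have h5 := Real.exp_pos (-x)
  rw [h2]
  nlinarith

/-- The operator contracts the weighted distance `sup |φ s - ψ s| / s²` by the factor `E[T]`. -/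
lemma Admissible.mixOp_contract [IsProbabilityMeasure FT] [IsProbabilityMeasure FA] (hμ : 0 ≤ μ)
    (hφ : Admissible μ φ) (hψ : Admissible μ ψ) (hT : ∀ᵐ t ∂FT, 0 ≤ t) (hA : ∀ᵐ a ∂FA, 0 ≤ a)
    (hTi : Integrable (fun t => t) FT)
    (hAi : Integrable (fun a => a) FA) (hA1 : ∫ a, a ∂FA = 1) {C : ℝ}
    (h : ∀ s, 0 ≤ s → |φ s - ψ s| ≤ C * s ^ 2) {s : ℝ} (hs : 0 ≤ s) :
    |_root_.mixOp FT FA μ φ s - _root_.mixOp FT FA μ ψ s| ≤ ((∫ t, t ∂FT) * C) * s ^ 2 := by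
  have hC : 0 ≤ C := by simpa using (abs_nonneg _).trans (h 1 zero_le_one)
  have hσ : |sigmaFun FT μ φ s - sigmaFun FT μ ψ s| ≤ ((∫ t, t ∂FT) * C) * s ^ 2 := by
    rw [sigmaFun, sigmaFun, ← integral_sub (hφ.integrable_kernel hμ hT hs)
      (hψ.integrable_kernel hμ hT hs), mul_assoc, ← integral_mul_const, ← Real.norm_eq_abs]
    refine norm_integral_le_of_norm_le (hTi.mul_const _) ?_
    filter_upwards [hT] with t ht
    rw [Real.norm_eq_abs]
    by_cases h0 : t = 0
    · simp [h0]
    · have ht' : 0 < t := lt_of_le_of_ne ht (Ne.symm h0)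
      simp only [h0, if_false]
      rw [← sub_div, abs_div, abs_of_pos ht', div_le_iff₀ ht']
      have := h _ (mul_nonneg ht hs)
      rw [abs_sub_comm] at this
      calc |1 - φ (t * s) - (1 - ψ (t * s))| = |ψ (t * s) - φ (t * s)| := by ring_nf
        _ ≤ C * (t * s) ^ 2 := this
        _ = t * (C * s ^ 2) * t := by ring
  refine le_trans ?_ hσ
  rw [_root_.mixOp, _root_.mixOp, ← integral_sub
    (integrable_exp_neg_mul hA (hφ.sigma_nonneg hμ hT hs))
    (integrable_exp_neg_mul hA (hψ.sigma_nonneg hμ hT hs)), ← Real.norm_eq_abs]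
  refine (norm_integral_le_of_norm_le
    (hAi.mul_const |sigmaFun FT μ φ s - sigmaFun FT μ ψ s|) ?_).trans_eq ?_
  · filter_upwards [hA] with a ha
    rw [Real.norm_eq_abs]
    refine (abs_exp_neg_sub_exp_neg_le (mul_nonneg ha (hφ.sigma_nonneg hμ hT hs))
      (mul_nonneg ha (hψ.sigma_nonneg hμ hT hs))).trans_eq ?_
    rw [← mul_sub, abs_mul, abs_of_nonneg ha]
  · rw [integral_mul_const, hA1, one_mul]

end

/-! ### Fixed points of the operator -/

section
variable {μ : ℝ} {FT FA : Measure ℝ}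

lemma exp_neg_le_quadratic {y : ℝ} (hy : 0 ≤ y) : Real.exp (-y) ≤ 1 - y + y ^ 2 / 2 := by
  have := Real.quadratic_le_exp_of_nonneg hy
  rw [Real.exp_neg, inv_le_iff_one_le_mul₀ (Real.exp_pos y)]
  nlinarith [mul_nonneg hy hy, mul_nonneg (mul_nonneg hy hy) hy,
    mul_nonneg (mul_nonneg hy hy) (mul_nonneg hy hy), sq_nonneg (y - 1),
    mul_le_mul_of_nonneg_left this
      (by nlinarith [sq_nonneg (y - 1)] : (0 : ℝ) ≤ 1 - y + y ^ 2 / 2)]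

/-- A second-order upper bound at `0` for `φ` yields one for the image of `φ`. -/
lemma Admissible.mixOp_upper {φ : ℝ → ℝ} [IsProbabilityMeasure FT] [IsProbabilityMeasure FA]
    (hμ : 0 ≤ μ)
    (hφ : Admissible μ φ) (hT : ∀ᵐ t ∂FT, 0 ≤ t) (hA : ∀ᵐ a ∂FA, 0 ≤ a)
    (hTi : Integrable (fun t => t) FT) (hAi : Integrable (fun a => a) FA) (hA1 : ∫ a, a ∂FA = 1)
    (hA2 : Integrable (fun a => a ^ 2) FA) {C : ℝ}
    (h : ∀ s, 0 ≤ s → φ s ≤ 1 - μ * s + C * s ^ 2) {s : ℝ} (hs : 0 ≤ s) :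
    _root_.mixOp FT FA μ φ s ≤
      1 - μ * s + ((∫ t, t ∂FT) * C + (∫ a, a ^ 2 ∂FA) * μ ^ 2 / 2) * s ^ 2 := by
  set σ := sigmaFun FT μ φ s with hσ
  have σ0 : 0 ≤ σ := hφ.sigma_nonneg hμ hT hs
  have σ1 : σ ≤ μ * s := hφ.sigma_le hμ hT hs
  have σ2 : μ * s - (∫ t, t ∂FT) * (C * s ^ 2) ≤ σ := by
    have h1 := integral_mono_ae
      ((integrable_const (μ * s)).sub (hTi.mul_const (C * s ^ 2))) (hφ.integrable_kernel hμ hT hs)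
      (hT.mono fun t ht => by
        simp only [Pi.sub_apply]
        by_cases h0 : t = 0
        · simp [h0]
        · have ht' : 0 < t := lt_of_le_of_ne ht (Ne.symm h0)
          simp only [h0, if_false]
          rw [le_div_iff₀ ht']
          have := h _ (mul_nonneg ht hs)
          nlinarith)
    simp only [Pi.sub_apply] at h1
    rw [integral_sub (integrable_const _) (hTi.mul_const _)] at h1
    simpa [hσ, sigmaFun, integral_mul_const] using h1
  have h2 := integral_mono_ae (integrable_exp_neg_mul hA σ0)
    (((integrable_const (1 : ℝ)).sub (hAi.mul_const σ)).add (hA2.mul_const (σ ^ 2 / 2)))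
    (hA.mono fun a ha => by
      have := exp_neg_le_quadratic (mul_nonneg ha σ0)
      simp only [Pi.sub_apply, Pi.add_apply]
      rw [mul_pow] at this
      linarith)
  simp only [Pi.sub_apply, Pi.add_apply] at h2
  have hi1 : Integrable (fun a => 1 - a * σ) FA := (integrable_const (1 : ℝ)).sub (hAi.mul_const σ)
  rw [integral_add hi1 (hA2.mul_const (σ ^ 2 / 2)),
    integral_sub (integrable_const _) (hAi.mul_const _), integral_mul_const, integral_mul_const,
    hA1] at h2
  have h3 : (∫ a, a ^ 2 ∂FA) * (σ ^ 2 / 2) ≤ (∫ a, a ^ 2 ∂FA) * ((μ * s) ^ 2 / 2) := by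
    refine mul_le_mul_of_nonneg_left ?_ (integral_nonneg fun a => sq_nonneg a)
    have : σ ^ 2 ≤ (μ * s) ^ 2 := pow_le_pow_left₀ σ0 σ1 2
    linarith
  simp at h2
  rw [_root_.mixOp, ← hσ]
  nlinarith

/-- Iterating the operator from `e^{-μ s}` converges pointwise to an admissible fixed point with a
second-order bound at `0`. -/
lemma exists_fixedPoint [IsProbabilityMeasure FT] [IsProbabilityMeasure FA] (hμ : 0 ≤ μ)
    (hT : ∀ᵐ t ∂FT, 0 ≤ t) (hA : ∀ᵐ a ∂FA, 0 ≤ a)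
    (hTi : Integrable (fun t => t) FT) (hT1 : ∫ t, t ∂FT < 1)
    (hAi : Integrable (fun a => a) FA) (hA1 : ∫ a, a ∂FA = 1)
    (hA2 : Integrable (fun a => a ^ 2) FA) :
    ∃ φ : ℝ → ℝ, Admissible μ φ ∧ (∃ C, ∀ s, 0 ≤ s → φ s ≤ 1 - μ * s + C * s ^ 2) ∧
      ∀ s, 0 ≤ s → mixOp FT FA μ φ s = φ s := by
  set m := ∫ t, t ∂FT with hm
  have hm0 : 0 ≤ m := integral_nonneg_of_ae hT
  set f : ℕ → ℝ → ℝ := fun n => (mixOp FT FA μ)^[n] (fun s => Real.exp (-(s * μ))) with hf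
  have fsucc : ∀ n, f (n + 1) = mixOp FT FA μ (f n) := fun n =>
    Function.iterate_succ_apply' _ _ _
  have adm : ∀ n, Admissible μ (f n) := by
    intro n
    induction n with
    | zero =>
      refine ⟨LaplacePos.expo hμ, by simp [hf], fun s hs => ?_⟩
      have := Real.add_one_le_exp (-(s * μ))
      simp only [hf, Function.iterate_zero, id]
      linarith
    | succ n ih => rw [fsucc]; exact ih.mixOp hμ hT hA hAi hA1
  have up0 : ∀ s, 0 ≤ s → f 0 s ≤ 1 - μ * s + (μ ^ 2 / 2) * s ^ 2 := by
    intro s hs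
    have := exp_neg_le_quadratic (mul_nonneg hs hμ)
    simp only [hf, Function.iterate_zero, id]
    nlinarith
  obtain ⟨C1, hC1⟩ : ∃ C1, ∀ s, 0 ≤ s → f 1 s ≤ 1 - μ * s + C1 * s ^ 2 :=
    ⟨_, fun s hs => by
      rw [fsucc 0]; exact (adm 0).mixOp_upper hμ hT hA hTi hAi hA1 hA2 up0 hs⟩
  set C := max C1 (μ ^ 2 / 2) with hC
  have step : ∀ n s, 0 ≤ s → |f (n + 1) s - f n s| ≤ (m ^ n * C) * s ^ 2 := by
    intro n
    induction n with
    | zero =>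
      intro s hs
      have h1 := hC1 s hs
      have h2 := up0 s hs
      have h3 := (adm 0).low s hs
      have h4 := (adm 1).low s hs
      have h5 : C1 * s ^ 2 ≤ C * s ^ 2 :=
        mul_le_mul_of_nonneg_right (le_max_left _ _) (sq_nonneg s)
      have h6 : μ ^ 2 / 2 * s ^ 2 ≤ C * s ^ 2 :=
        mul_le_mul_of_nonneg_right (le_max_right _ _) (sq_nonneg s)
      rw [abs_le, zero_add, pow_zero, one_mul]
      constructor <;> linarith
    | succ n ih =>
      intro s hs
      have := (adm (n + 1)).mixOp_contract hμ (adm n) hT hA hTi hAi hA1 ih hs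
      rw [← fsucc, ← fsucc] at this
      rw [pow_succ']
      simpa [mul_assoc] using this
  have dist_step : ∀ s, 0 ≤ s → ∀ n, dist (f n s) (f (n + 1) s) ≤ (C * s ^ 2) * m ^ n := by
    intro s hs n
    rw [dist_comm, Real.dist_eq]
    exact (step n s hs).trans_eq (by ring)
  have lim : ∀ s, ∃ l, 0 ≤ s → Tendsto (fun n => f n s) atTop (𝓝 l) := by
    intro s
    by_cases hs : 0 ≤ s
    · obtain ⟨l, hl⟩ := cauchySeq_tendsto_of_complete
        (cauchySeq_of_le_geometric m _ hT1 (dist_step s hs))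
      exact ⟨l, fun _ => hl⟩
    · exact ⟨0, fun h => absurd h hs⟩
  choose φ hφ using lim
  have close : ∀ n s, 0 ≤ s → |f n s - φ s| ≤ (C * m ^ n / (1 - m)) * s ^ 2 := by
    intro n s hs
    have := dist_le_of_le_geometric_of_tendsto m _ hT1 (dist_step s hs) (hφ s hs) n
    rw [Real.dist_eq] at this
    exact this.trans_eq (by ring)
  have admφ : Admissible μ φ := by
    refine ⟨LaplacePos.of_tendsto (.of_forall fun n => (adm n).pos) hφ, ?_, fun s hs => ?_⟩
    · refine tendsto_nhds_unique (hφ 0 le_rfl) ?_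
      simp only [(adm _).zero]
      exact tendsto_const_nhds
    · exact ge_of_tendsto (hφ s hs) (.of_forall fun n => (adm n).low s hs)
  refine ⟨φ, admφ, ⟨μ ^ 2 / 2 + C * m ^ 0 / (1 - m), fun s hs => ?_⟩, fun s hs => ?_⟩
  · have h1 := (abs_le.1 (close 0 s hs)).1
    have h2 := up0 s hs
    linarith
  · refine tendsto_nhds_unique ?_ ((tendsto_add_atTop_iff_nat 1).2 (hφ s hs))
    rw [tendsto_iff_dist_tendsto_zero]
    have hz : Tendsto (fun n => (m * (C * m ^ n / (1 - m))) * s ^ 2) atTop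
        (𝓝 ((m * (C * 0 / (1 - m))) * s ^ 2)) :=
      ((((tendsto_pow_atTop_nhds_zero_of_lt_one hm0 hT1).const_mul C).div_const _).const_mul
        m).mul_const _
    simp only [mul_zero, zero_div, zero_mul] at hz
    refine squeeze_zero (fun _ => dist_nonneg) (fun n => ?_) hz
    rw [Real.dist_eq, fsucc]
    exact (adm n).mixOp_contract hμ admφ hT hA hTi hAi hA1 (close n) hs

/-- Two admissible fixed points at finite weighted distance coincide on `[0,∞)`. -/
lemma fixedPoint_unique {φ ψ : ℝ → ℝ} [IsProbabilityMeasure FT] [IsProbabilityMeasure FA]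
    (hμ : 0 ≤ μ) (hφ : Admissible μ φ) (hψ : Admissible μ ψ)
    (hT : ∀ᵐ t ∂FT, 0 ≤ t) (hA : ∀ᵐ a ∂FA, 0 ≤ a)
    (hTi : Integrable (fun t => t) FT) (hT1 : ∫ t, t ∂FT < 1)
    (hAi : Integrable (fun a => a) FA) (hA1 : ∫ a, a ∂FA = 1)
    (eφ : ∀ s, 0 ≤ s → mixOp FT FA μ φ s = φ s) (eψ : ∀ s, 0 ≤ s → mixOp FT FA μ ψ s = ψ s)
    {C : ℝ} (h : ∀ s, 0 ≤ s → |φ s - ψ s| ≤ C * s ^ 2) {s : ℝ} (hs : 0 ≤ s) : φ s = ψ s := by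
  set m := ∫ t, t ∂FT with hm
  have hm0 : 0 ≤ m := integral_nonneg_of_ae hT
  have hn : ∀ n : ℕ, ∀ s, 0 ≤ s → |φ s - ψ s| ≤ (m ^ n * C) * s ^ 2 := by
    intro n
    induction n with
    | zero => simpa using h
    | succ n ih =>
      intro s hs
      have := hφ.mixOp_contract hμ hψ hT hA hTi hAi hA1 ih hs
      rw [eφ s hs, eψ s hs] at this
      rw [pow_succ']
      simpa [mul_assoc] using this
  have hz : Tendsto (fun n => (m ^ n * C) * s ^ 2) atTop (𝓝 ((0 * C) * s ^ 2)) :=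
    ((tendsto_pow_atTop_nhds_zero_of_lt_one hm0 hT1).mul_const C).mul_const _
  simp only [zero_mul] at hz
  have := ge_of_tendsto hz (.of_forall fun n => hn n s hs)
  exact sub_eq_zero.1 (abs_nonpos_iff.1 this)

end

/-! ### Moments and the behaviour of the Laplace transform at zero -/

/-- Convergence of integrals when the integrands converge to a function that bounds them from
above; the limit may be infinite. -/
lemma tendsto_lintegral_of_le {α : Type*} [MeasurableSpace α] {P : Measure α}
    {f : ℕ → α → ENNReal} {g : α → ENNReal} (hf : ∀ n, AEMeasurable (f n) P)
    (hle : ∀ᶠ n in atTop, ∀ᵐ x ∂P, f n x ≤ g x)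
    (hlim : ∀ᵐ x ∂P, Tendsto (fun n => f n x) atTop (𝓝 (g x))) :
    Tendsto (fun n => ∫⁻ x, f n x ∂P) atTop (𝓝 (∫⁻ x, g x ∂P)) := by
  refine tendsto_of_le_liminf_of_limsup_le ?_ ?_
  · calc ∫⁻ x, g x ∂P = ∫⁻ x, liminf (fun n => f n x) atTop ∂P :=
          lintegral_congr_ae (hlim.mono fun x hx => hx.liminf_eq.symm)
      _ ≤ _ := lintegral_liminf_le' hf
  · exact limsup_le_of_le (h := hle.mono fun n hn => lintegral_mono_ae hn)

/-- First difference quotient of `u ↦ e^{-x u}` at `0`, with the sign reversed. -/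
noncomputable def quot1 (u x : ℝ) : ℝ := (1 - Real.exp (-(x * u))) / u

/-- Second-order difference quotient of `u ↦ e^{-x u}` at `0`. -/
noncomputable def quot2 (u x : ℝ) : ℝ := (Real.exp (-(x * u)) - 1 + x * u) / u ^ 2

lemma quot1_nonneg {u x : ℝ} (hu : 0 < u) (hx : 0 ≤ x) : 0 ≤ quot1 u x := by
  have : Real.exp (-(x * u)) ≤ 1 := Real.exp_le_one_iff.2 (by nlinarith [mul_nonneg hx hu.le])
  exact div_nonneg (by linarith) hu.le

lemma quot1_le {u x : ℝ} (hu : 0 < u) : quot1 u x ≤ x := by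
  rw [quot1, div_le_iff₀ hu]
  linarith [Real.add_one_le_exp (-(x * u))]

lemma quot2_nonneg (u x : ℝ) : 0 ≤ quot2 u x :=
  div_nonneg (by linarith [Real.add_one_le_exp (-(x * u))]) (sq_nonneg u)

lemma quot2_le {u x : ℝ} (hu : 0 < u) (hx : 0 ≤ x) : quot2 u x ≤ x ^ 2 / 2 := by
  rw [quot2, div_le_iff₀ (by positivity)]
  have := exp_neg_le_quadratic (mul_nonneg hx hu.le)
  nlinarith

lemma tendsto_quot1 {u : ℕ → ℝ} (hu : ∀ᶠ n in atTop, 0 < u n) (hu0 : Tendsto u atTop (𝓝 0))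
    (x : ℝ) : Tendsto (fun n => quot1 (u n) x) atTop (𝓝 x) := by
  have hd : HasDerivAt (fun v : ℝ => 1 - Real.exp (-(x * v))) x 0 := by
    have := (((hasDerivAt_id (0 : ℝ)).const_mul x).neg.exp).const_sub 1
    simpa using this
  have := hd.tendsto_slope_zero.comp (tendsto_nhdsWithin_iff.2 ⟨hu0, hu.mono fun n hn => hn.ne'⟩)
  refine this.congr fun n => ?_
  simp [quot1, div_eq_inv_mul]

lemma tendsto_quot2 {u : ℕ → ℝ} (hu : ∀ᶠ n in atTop, 0 < u n) (hu0 : Tendsto u atTop (𝓝 0))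
    {x : ℝ} (hx : 0 ≤ x) : Tendsto (fun n => quot2 (u n) x) atTop (𝓝 (x ^ 2 / 2)) := by
  have hlow : Tendsto (fun n => x ^ 2 / 2 - x ^ 3 * u n) atTop (𝓝 (x ^ 2 / 2 - x ^ 3 * 0)) :=
    (hu0.const_mul _).const_sub _
  rw [mul_zero, sub_zero] at hlow
  have hxu : Tendsto (fun n => x * u n) atTop (𝓝 (x * 0)) := hu0.const_mul x
  rw [mul_zero] at hxu
  refine tendsto_of_tendsto_of_tendsto_of_le_of_le' hlow tendsto_const_nhds ?_
    (hu.mono fun n hn => quot2_le hn hx)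
  filter_upwards [hu, hxu.eventually (gt_mem_nhds one_pos)] with n hn h1
  have h0 : 0 ≤ x * u n := mul_nonneg hx hn.le
  have hb := Real.exp_bound (x := -(x * u n)) (by rw [abs_neg, abs_of_nonneg h0]; exact h1.le)
    (n := 3) (by norm_num)
  rw [abs_neg, abs_of_nonneg h0] at hb
  have hb' := (abs_le.1 hb).1
  simp [Finset.sum_range_succ, Nat.factorial] at hb'
  rw [quot2, le_div_iff₀ (by positivity)]
  have h3 : 0 ≤ (x * u n) ^ 3 := by positivity
  nlinarith

section
variable {P : Measure ℝ} {u : ℕ → ℝ}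

lemma measurable_quot1 (u : ℝ) : Measurable (quot1 u) := by
  unfold quot1; fun_prop

lemma measurable_quot2 (u : ℝ) : Measurable (quot2 u) := by
  unfold quot2; fun_prop

lemma tendsto_lintegral_quot1 (hu : ∀ᶠ n in atTop, 0 < u n)
    (hu0 : Tendsto u atTop (𝓝 0)) :
    Tendsto (fun n => ∫⁻ x, ENNReal.ofReal (quot1 (u n) x) ∂P) atTop
      (𝓝 (∫⁻ x, ENNReal.ofReal x ∂P)) :=
  tendsto_lintegral_of_le (fun n => (measurable_quot1 _).ennreal_ofReal.aemeasurable)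
    (hu.mono fun n hn => .of_forall fun x => ENNReal.ofReal_le_ofReal (quot1_le hn))
    (.of_forall fun x => ENNReal.tendsto_ofReal (tendsto_quot1 hu hu0 x))

lemma tendsto_lintegral_quot2 (hP : ∀ᵐ x ∂P, 0 ≤ x) (hu : ∀ᶠ n in atTop, 0 < u n)
    (hu0 : Tendsto u atTop (𝓝 0)) :
    Tendsto (fun n => ∫⁻ x, ENNReal.ofReal (quot2 (u n) x) ∂P) atTop
      (𝓝 (∫⁻ x, ENNReal.ofReal (x ^ 2 / 2) ∂P)) :=
  tendsto_lintegral_of_le (fun n => (measurable_quot2 _).ennreal_ofReal.aemeasurable)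
    (hu.mono fun n hn => hP.mono fun x hx => ENNReal.ofReal_le_ofReal (quot2_le hn hx))
    (hP.mono fun x hx => ENNReal.tendsto_ofReal (tendsto_quot2 hu hu0 hx))

lemma lintegral_quot1 [IsProbabilityMeasure P] (hP : ∀ᵐ x ∂P, 0 ≤ x) {u : ℝ} (hu : 0 < u) :
    ∫⁻ x, ENNReal.ofReal (quot1 u x) ∂P =
      ENNReal.ofReal ((1 - ∫ x, Real.exp (-(x * u)) ∂P) / u) := by
  have hi : Integrable (quot1 u) P :=
    ((integrable_const (1 : ℝ)).sub (integrable_exp_neg_mul hP hu.le)).div_const u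
  rw [← ofReal_integral_eq_lintegral_ofReal hi (hP.mono fun x hx => quot1_nonneg hu hx)]
  congr 1
  simp only [quot1]
  rw [integral_div, integral_sub (integrable_const (1 : ℝ)) (integrable_exp_neg_mul hP hu.le)]
  simp

lemma lintegral_quot2 [IsProbabilityMeasure P] (hP : ∀ᵐ x ∂P, 0 ≤ x)
    (hi : Integrable (fun x => x) P) {u : ℝ} (hu : 0 < u) :
    ∫⁻ x, ENNReal.ofReal (quot2 u x) ∂P =
      ENNReal.ofReal (((∫ x, Real.exp (-(x * u)) ∂P) - 1 + (∫ x, x ∂P) * u) / u ^ 2) := by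
  have h1 : Integrable (fun x => Real.exp (-(x * u)) - 1) P :=
    (integrable_exp_neg_mul hP hu.le).sub (integrable_const (1 : ℝ))
  have hq : Integrable (quot2 u) P := (h1.add (hi.mul_const u)).div_const _
  rw [← ofReal_integral_eq_lintegral_ofReal hq (.of_forall fun x => quot2_nonneg u x)]
  congr 1
  simp only [quot2]
  rw [integral_div, integral_add h1 (hi.mul_const u),
    integral_sub (integrable_exp_neg_mul hP hu.le) (integrable_const (1 : ℝ)), integral_mul_const]
  simp

end

lemma LS_eq (F : Measure ℝ) (s : ℝ) : LS F s = ∫ x, Real.exp (-(x * s)) ∂F := by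
  simp only [LS, mul_comm]

lemma seq_pos : ∀ᶠ n : ℕ in atTop, (0 : ℝ) < 1 / ((n : ℝ) + 1) :=
  .of_forall fun _ => Nat.one_div_pos_of_nat

/-- Mean and second moment of `F` are read off from the second-order behaviour of its Laplace
transform at `0`. -/
lemma moments_of_LS {F : Measure ℝ} [IsProbabilityMeasure F] (hF : ∀ᵐ x ∂F, 0 ≤ x) {μ C : ℝ}
    (hμ : 0 ≤ μ) (hlow : ∀ s, 0 ≤ s → 1 - μ * s ≤ LS F s)
    (hup : ∀ s, 0 ≤ s → LS F s ≤ 1 - μ * s + C * s ^ 2) :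
    ∫ x, x ∂F = μ ∧ Integrable (fun x => x ^ 2) F := by
  have hu0 := tendsto_one_div_add_atTop_nhds_zero_nat (𝕜 := ℝ)
  have h1 := tendsto_lintegral_quot1 (P := F) seq_pos hu0
  have h2 : Tendsto (fun n : ℕ => ∫⁻ x, ENNReal.ofReal (quot1 (1 / ((n : ℝ) + 1)) x) ∂F) atTop
      (𝓝 (ENNReal.ofReal μ)) := by
    have hl : Tendsto (fun n : ℕ => μ - C * (1 / ((n : ℝ) + 1))) atTop (𝓝 (μ - C * 0)) :=
      (hu0.const_mul C).const_sub μ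
    rw [mul_zero, sub_zero] at hl
    refine tendsto_of_tendsto_of_tendsto_of_le_of_le (ENNReal.tendsto_ofReal hl)
      tendsto_const_nhds (fun n => ?_) (fun n => ?_)
    all_goals
      have hu : (0 : ℝ) < 1 / ((n : ℝ) + 1) := Nat.one_div_pos_of_nat
      simp only
      rw [lintegral_quot1 hF hu, ← LS_eq]
      refine ENNReal.ofReal_le_ofReal ?_
      have := hlow _ hu.le
      have := hup _ hu.le
    · rw [le_div_iff₀ hu]
      nlinarith
    · rw [div_le_iff₀ hu]
      linarith
  have hmean := tendsto_nhds_unique h1 h2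
  have hi : Integrable (fun x => x) F := by
    refine ⟨aestronglyMeasurable_id, ?_⟩
    rw [hasFiniteIntegral_iff_ofReal hF, hmean]
    exact ENNReal.ofReal_lt_top
  have hm : ∫ x, x ∂F = μ := by
    rw [integral_eq_lintegral_of_nonneg_ae hF aestronglyMeasurable_id, hmean,
      ENNReal.toReal_ofReal hμ]
  refine ⟨hm, ?_⟩
  have h3 : ∫⁻ x, ENNReal.ofReal (x ^ 2 / 2) ∂F ≤ ENNReal.ofReal C := by
    refine le_of_tendsto (tendsto_lintegral_quot2 hF seq_pos hu0) (.of_forall fun n => ?_)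
    have hu : (0 : ℝ) < 1 / ((n : ℝ) + 1) := Nat.one_div_pos_of_nat
    rw [lintegral_quot2 hF hi hu, ← LS_eq, hm]
    refine ENNReal.ofReal_le_ofReal ?_
    have := hup _ hu.le
    rw [div_le_iff₀ (by positivity)]
    linarith
  have hi2 : Integrable (fun x : ℝ => x ^ 2 / 2) F := by
    refine ⟨by fun_prop, ?_⟩
    rw [hasFiniteIntegral_iff_ofReal (.of_forall fun x => by positivity)]
    exact h3.trans_lt ENNReal.ofReal_lt_top
  simpa using hi2.mul_const 2

section
variable {F : Measure ℝ} [IsProbabilityMeasure F] {μ : ℝ}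

lemma LS_low (hF : ∀ᵐ x ∂F, 0 ≤ x) (hi : Integrable (fun x => x) F) (hm : ∫ x, x ∂F = μ) {s : ℝ}
    (hs : 0 ≤ s) : 1 - μ * s ≤ LS F s := by
  have h1 := integral_mono_ae ((integrable_const (1 : ℝ)).sub (hi.mul_const s))
    (integrable_exp_neg_mul hF hs) (.of_forall fun x => by
      have := Real.add_one_le_exp (-(x * s))
      simp only [Pi.sub_apply]
      linarith)
  simp only [Pi.sub_apply] at h1
  rw [integral_sub (integrable_const (1 : ℝ)) (hi.mul_const s), integral_mul_const, hm] at h1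
  rw [LS_eq]
  simpa using h1

lemma LS_up (hF : ∀ᵐ x ∂F, 0 ≤ x) (hi : Integrable (fun x => x) F) (hm : ∫ x, x ∂F = μ)
    (hi2 : Integrable (fun x => x ^ 2) F) {s : ℝ} (hs : 0 ≤ s) :
    LS F s ≤ 1 - μ * s + (∫ x, x ^ 2 ∂F) / 2 * s ^ 2 := by
  have h0 : Integrable (fun x => 1 - x * s) F := (integrable_const (1 : ℝ)).sub (hi.mul_const s)
  have h1 := integral_mono_ae (integrable_exp_neg_mul hF hs) (h0.add (hi2.mul_const (s ^ 2 / 2)))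
    (hF.mono fun x hx => by
      have := exp_neg_le_quadratic (mul_nonneg hx hs)
      simp only [Pi.add_apply]
      rw [mul_pow] at this
      linarith)
  simp only [Pi.add_apply] at h1
  rw [integral_add h0 (hi2.mul_const _), integral_sub (integrable_const (1 : ℝ)) (hi.mul_const s),
    integral_mul_const, integral_mul_const, hm] at h1
  rw [LS_eq]
  simp at h1
  linarith

lemma admissible_LS (hF : ∀ᵐ x ∂F, 0 ≤ x) (hi : Integrable (fun x => x) F)
    (hm : ∫ x, x ∂F = μ) : Admissible μ (LS F) where
  pos := (LaplacePos.integral (f := fun x s => Real.exp (-(s * x)))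
    (hF.mono fun _ hx => LaplacePos.expo hx) fun s hs => by
      simpa only [mul_comm] using integrable_exp_neg_mul hF hs)
  zero := by simp [LS]
  low _ hs := LS_low hF hi hm hs

end

/-! ### The moment equations of a solution -/

section
variable {FT FA F : Measure ℝ} {μ : ℝ}

lemma Sol.integrable_id (hμ : 0 < μ) (h : Sol FT FA μ F) : Integrable (fun x => x) F := by
  by_contra hi
  have := h.2.2.1
  rw [integral_undef hi] at this
  exact hμ.ne this

/-- For a solution, `σ(s) / s → μ` as `s → 0`: the integrands are dominated by `μ`. -/
lemma tendsto_sigma_div [IsProbabilityMeasure FT] (hμ : 0 < μ) (hT : ∀ᵐ t ∂FT, 0 ≤ t)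
    {φ : ℝ → ℝ} (hφ : Admissible μ φ) {C : ℝ}
    (hup : ∀ s, 0 ≤ s → φ s ≤ 1 - μ * s + C * s ^ 2)
    {u : ℕ → ℝ} (hu : ∀ n, 0 < u n) (hu0 : Tendsto u atTop (𝓝 0)) :
    Tendsto (fun n => sigmaFun FT μ φ (u n) / u n) atTop (𝓝 μ) := by
  have hconst : 𝓝 (∫ _t, μ ∂FT) = 𝓝 μ := by simp
  simp only [sigmaFun, ← integral_div]
  rw [← hconst]
  refine tendsto_integral_of_dominated_convergence (fun _ => μ)
    (fun n => ((hφ.integrable_kernel hμ.le hT (hu n).le).div_const _).aestronglyMeasurable)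
    (integrable_const _) (fun n => ?_) ?_
  · filter_upwards [hT] with t ht
    have hk := hφ.kernel_mem hμ.le (hu n).le ht
    rw [Real.norm_eq_abs, abs_of_nonneg (div_nonneg hk.1 (hu n).le), div_le_iff₀ (hu n)]
    exact hk.2
  · filter_upwards [hT] with t ht
    have hl : Tendsto (fun n => μ - C * t * u n) atTop (𝓝 (μ - C * t * 0)) :=
      (hu0.const_mul _).const_sub μ
    rw [mul_zero, sub_zero] at hl
    refine tendsto_of_tendsto_of_tendsto_of_le_of_le hl tendsto_const_nhds (fun n => ?_)
      (fun n => ?_)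
    · have hun := hu n
      simp only
      rw [le_div_iff₀ hun]
      split_ifs with h0
      · simp [h0]
      · have ht' : 0 < t := lt_of_le_of_ne ht (Ne.symm h0)
        rw [le_div_iff₀ ht']
        have := hup _ (mul_nonneg ht hun.le)
        nlinarith
    · simp only
      rw [div_le_iff₀ (hu n)]
      exact (hφ.kernel_mem hμ.le (hu n).le ht).2

/-- Expanding the functional equation to first and second order at `s = 0`. All integrals are taken
in `[0,∞]`, so that no moment of `T` or `A` has to be finite a priori. -/
lemma Sol.moment_equations [IsProbabilityMeasure FT] [IsProbabilityMeasure FA] (hμ : 0 < μ)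
    (hT : ∀ᵐ t ∂FT, 0 ≤ t) (hA : ∀ᵐ a ∂FA, 0 ≤ a) (h : Sol FT FA μ F) :
    ∫⁻ a, ENNReal.ofReal a ∂FA = 1 ∧
    ENNReal.ofReal ((∫ x, x ^ 2 ∂F) / 2) =
      (∫⁻ t, ENNReal.ofReal t ∂FT) * ENNReal.ofReal ((∫ x, x ^ 2 ∂F) / 2) +
      ENNReal.ofReal (μ ^ 2) * ∫⁻ a, ENNReal.ofReal (a ^ 2 / 2) ∂FA := by
  have hi := h.integrable_id hμ
  obtain ⟨hprob, hF0, hm, hi2, heq⟩ := h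
  have hF := ae_nonneg_of_Iio hF0
  have adm : Admissible μ (LS F) := admissible_LS hF hi hm
  set M := (∫ x, x ^ 2 ∂F) / 2 with hM
  have hM0 : 0 ≤ M := div_nonneg (integral_nonneg fun x => sq_nonneg x) two_pos.le
  have hup : ∀ s, 0 ≤ s → LS F s ≤ 1 - μ * s + M * s ^ 2 := fun s hs => LS_up hF hi hm hi2 hs
  set u : ℕ → ℝ := fun n => 1 / ((n : ℝ) + 1) with hu_def
  have hu : ∀ n, 0 < u n := fun n => Nat.one_div_pos_of_nat
  have hu0 : Tendsto u atTop (𝓝 0) := tendsto_one_div_add_atTop_nhds_zero_nat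
  set σ : ℕ → ℝ := fun n => sigmaFun FT μ (LS F) (u n) with hσ
  have heq' : ∀ n, ∫ a, Real.exp (-(a * σ n)) ∂FA = LS F (u n) := fun n =>
    (heq _ (hu n).le).symm
  have hσu : Tendsto (fun n => σ n / u n) atTop (𝓝 μ) := tendsto_sigma_div hμ hT adm hup hu hu0
  have hσ0 : Tendsto σ atTop (𝓝 0) := by
    have := hσu.mul hu0
    rw [mul_zero] at this
    exact this.congr fun n => div_mul_cancel₀ _ (hu n).ne'
  have hσpos : ∀ᶠ n in atTop, 0 < σ n := by
    filter_upwards [hσu.eventually (lt_mem_nhds hμ)] with n hn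
    exact (div_pos_iff_of_pos_right (hu n)).1 hn
  -- both sides of `(1 - LS F u) / u = (σ / u) * ((1 - ∫ e^{-aσ}) / σ)` converge
  have hA1 : ∫⁻ a, ENNReal.ofReal a ∂FA = 1 := by
    have h1 := tendsto_lintegral_quot1 (P := F) (.of_forall hu) hu0
    have hmean : ∫⁻ x, ENNReal.ofReal x ∂F = ENNReal.ofReal μ := by
      rw [← ofReal_integral_eq_lintegral_ofReal hi hF, hm]
    rw [hmean] at h1
    have h2 := ENNReal.Tendsto.mul (ENNReal.tendsto_ofReal hσu) (.inl (by simpa using hμ))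
      (tendsto_lintegral_quot1 (P := FA) hσpos hσ0) (.inr ENNReal.ofReal_ne_top)
    have h3 := tendsto_nhds_unique_of_eventuallyEq h1 h2 (by
      filter_upwards [hσpos] with n hn
      rw [lintegral_quot1 hF (hu n), lintegral_quot1 hA hn, heq', ← LS_eq,
        ← ENNReal.ofReal_mul (div_pos hn (hu n)).le]
      congr 1
      field_simp)
    have h4 : ENNReal.ofReal μ * 1 = ENNReal.ofReal μ * ∫⁻ a, ENNReal.ofReal a ∂FA := by
      rw [mul_one]; exact h3
    exact ((ENNReal.mul_right_inj (by simpa using hμ) ENNReal.ofReal_ne_top).1 h4).symm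
  refine ⟨hA1, ?_⟩
  have hAi : Integrable (fun a => a) FA := by
    refine ⟨aestronglyMeasurable_id, ?_⟩
    rw [hasFiniteIntegral_iff_ofReal hA, hA1]
    exact ENNReal.one_lt_top
  have hA1' : ∫ a, a ∂FA = 1 := by
    rw [integral_eq_lintegral_of_nonneg_ae hA aestronglyMeasurable_id, hA1, ENNReal.toReal_one]
  -- second-order expansion of `LS F` along any null sequence
  have hMF : ∫⁻ x, ENNReal.ofReal (x ^ 2 / 2) ∂F = ENNReal.ofReal M := by
    rw [← ofReal_integral_eq_lintegral_ofReal (hi2.div_const 2) (.of_forall fun x => by positivity),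
      integral_div]
  have hq : ∀ v : ℕ → ℝ, (∀ n, 0 < v n) → Tendsto v atTop (𝓝 0) →
      Tendsto (fun n => ENNReal.ofReal ((LS F (v n) - 1 + μ * v n) / v n ^ 2)) atTop
        (𝓝 (ENNReal.ofReal M)) := by
    intro v hv hv0
    have := tendsto_lintegral_quot2 hF (.of_forall hv) hv0
    rw [hMF] at this
    refine this.congr fun n => ?_
    rw [lintegral_quot2 hF hi (hv n), ← LS_eq, hm]
  -- the part of the second-order term that is due to `T`
  let τ : ℕ → ℝ → ℝ := fun n t =>
    (μ * u n - (if t = 0 then μ * u n else (1 - LS F (t * u n)) / t)) / u n ^ 2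
  have hτi : ∀ n, Integrable (τ n) FT := fun n =>
    ((integrable_const _).sub (adm.integrable_kernel hμ.le hT (hu n).le)).div_const _
  have hτ0 : ∀ n, ∀ᵐ t ∂FT, 0 ≤ τ n t := fun n => hT.mono fun t ht =>
    div_nonneg (sub_nonneg.2 (adm.kernel_mem hμ.le (hu n).le ht).2) (sq_nonneg _)
  have hτint : ∀ n, ∫⁻ t, ENNReal.ofReal (τ n t) ∂FT =
      ENNReal.ofReal ((μ * u n - σ n) / u n ^ 2) := by
    intro n
    rw [← ofReal_integral_eq_lintegral_ofReal (hτi n) (hτ0 n)]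
    simp only [τ]
    rw [integral_div, integral_sub (integrable_const _) (adm.integrable_kernel hμ.le hT (hu n).le)]
    simp [hσ, sigmaFun]
  have hτform : ∀ n t, 0 < t →
      τ n t = t * ((LS F (t * u n) - 1 + μ * (t * u n)) / (t * u n) ^ 2) := by
    intro n t ht
    have := (hu n).ne'
    simp only [τ, ht.ne', if_false]
    field_simp
    ring
  have hτlim : Tendsto (fun n => ∫⁻ t, ENNReal.ofReal (τ n t) ∂FT) atTop
      (𝓝 (∫⁻ t, ENNReal.ofReal t * ENNReal.ofReal M ∂FT)) := by
    refine tendsto_lintegral_of_le (fun n => (hτi n).aemeasurable.ennreal_ofReal)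
      (.of_forall fun n => hT.mono fun t ht => ?_) (hT.mono fun t ht => ?_)
    · rw [← ENNReal.ofReal_mul ht]
      refine ENNReal.ofReal_le_ofReal ?_
      rcases ht.eq_or_lt with rfl | ht'
      · simp [τ]
      · rw [hτform n t ht']
        refine mul_le_mul_of_nonneg_left ?_ ht
        have hp := mul_pos ht' (hu n)
        rw [div_le_iff₀ (by positivity)]
        linarith [hup _ hp.le]
    · rcases ht.eq_or_lt with rfl | ht'
      · simp [τ]
      · have h0 : Tendsto (fun n => t * u n) atTop (𝓝 0) := by simpa using hu0.const_mul t
        have := ENNReal.Tendsto.const_mul (a := ENNReal.ofReal t)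
          (hq _ (fun n => mul_pos ht' (hu n)) h0) (.inr ENNReal.ofReal_ne_top)
        refine this.congr fun n => ?_
        rw [hτform n t ht', ENNReal.ofReal_mul ht]
  rw [lintegral_mul_const _ (by fun_prop)] at hτlim
  have hAlim := ENNReal.Tendsto.mul (ENNReal.tendsto_ofReal (hσu.pow 2))
    (.inl (by simpa using hμ.ne'))
    (tendsto_lintegral_quot2 hA hσpos hσ0) (.inr ENNReal.ofReal_ne_top)
  refine tendsto_nhds_unique_of_eventuallyEq (hq u hu hu0) (hτlim.add hAlim) ?_
  filter_upwards [hσpos] with n hn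
  have hle : 0 ≤ (μ * u n - σ n) / u n ^ 2 :=
    div_nonneg (sub_nonneg.2 (adm.sigma_le hμ.le hT (hu n).le)) (sq_nonneg _)
  have hge : 0 ≤ (LS F (u n) - 1 + 1 * σ n) / σ n ^ 2 := by
    rw [← heq']
    have h1 := integral_nonneg (μ := FA) (f := quot2 (σ n)) fun a => quot2_nonneg (σ n) a
    have hx := integrable_exp_neg_mul hA hn.le
    have h2 : Integrable (fun a => Real.exp (-(a * σ n)) - 1) FA := hx.sub (integrable_const (1 : ℝ))
    simp only [quot2] at h1
    rw [integral_div, integral_add h2 (hAi.mul_const _), integral_sub hx (integrable_const (1 : ℝ)),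
      integral_mul_const, hA1'] at h1
    simpa using h1
  rw [hτint, lintegral_quot2 hA hAi hn, heq', hA1', ← ENNReal.ofReal_mul (by positivity),
    ← ENNReal.ofReal_add hle (mul_nonneg (by positivity) hge)]
  congr 1
  have := (hu n).ne'
  have := hn.ne'
  field_simp
  ring

end

/-! ### Existence, uniqueness and variance -/

section
variable {FT FA F : Measure ℝ} {μ : ℝ}

lemma Cond.integrable_T (h : Cond FT FA) (hT : ∀ᵐ t ∂FT, 0 ≤ t) :
    Integrable (fun t => t) FT := by
  refine ⟨aestronglyMeasurable_id, ?_⟩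
  rw [hasFiniteIntegral_iff_ofReal hT]
  exact h.1.trans ENNReal.one_lt_top

lemma Cond.integral_T_lt (h : Cond FT FA) (hT : ∀ᵐ t ∂FT, 0 ≤ t) : ∫ t, t ∂FT < 1 := by
  rw [integral_eq_lintegral_of_nonneg_ae hT aestronglyMeasurable_id]
  exact (ENNReal.toReal_lt_toReal (h.1.trans ENNReal.one_lt_top).ne ENNReal.one_ne_top).2 h.1

lemma Cond.integrable_A (h : Cond FT FA) (hA : ∀ᵐ a ∂FA, 0 ≤ a) :
    Integrable (fun a => a) FA := by
  refine ⟨aestronglyMeasurable_id, ?_⟩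
  rw [hasFiniteIntegral_iff_ofReal hA, h.2.1]
  exact ENNReal.one_lt_top

lemma Cond.integral_A (h : Cond FT FA) (hA : ∀ᵐ a ∂FA, 0 ≤ a) : ∫ a, a ∂FA = 1 := by
  rw [integral_eq_lintegral_of_nonneg_ae hA aestronglyMeasurable_id, h.2.1, ENNReal.toReal_one]

lemma Cond.integrable_A_sq (h : Cond FT FA) : Integrable (fun a => a ^ 2) FA := by
  refine ⟨by fun_prop, ?_⟩
  rw [hasFiniteIntegral_iff_ofReal (.of_forall fun a => sq_nonneg a)]
  exact h.2.2

lemma Sol.integral_sq_pos (hμ : 0 < μ) (h : Sol FT FA μ F) : 0 < ∫ x, x ^ 2 ∂F := by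
  have hi := h.integrable_id hμ
  obtain ⟨hprob, -, hm, hi2, -⟩ := h
  have h1 : 0 ≤ ∫ x, (x ^ 2 - 2 * μ * x + μ ^ 2) ∂F :=
    integral_nonneg fun x => by
      have := sq_nonneg (x - μ)
      simp only [Pi.zero_apply]
      linarith
  have h2 : Integrable (fun x => x ^ 2 - 2 * μ * x) F := hi2.sub (hi.const_mul _)
  rw [integral_add h2 (integrable_const _),
    integral_sub hi2 (hi.const_mul _), integral_const_mul, hm] at h1
  simp only [integral_const, probReal_univ, one_smul] at h1
  nlinarith

theorem Cond.exists_sol [IsProbabilityMeasure FT] [IsProbabilityMeasure FA] (h : Cond FT FA)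
    (hμ : 0 < μ) (hT : ∀ᵐ t ∂FT, 0 ≤ t) (hA : ∀ᵐ a ∂FA, 0 ≤ a) : ∃ F, Sol FT FA μ F := by
  obtain ⟨φ, adm, ⟨C, hup⟩, hfix⟩ := exists_fixedPoint hμ.le hT hA (h.integrable_T hT)
    (h.integral_T_lt hT) (h.integrable_A hA) (h.integral_A hA) h.integrable_A_sq
  obtain ⟨F, hprob, hF0, hLS⟩ := adm.pos.exists_LS adm.zero adm.low
  obtain ⟨hm, hi2⟩ := moments_of_LS (ae_nonneg_of_Iio hF0) hμ.le
    (fun s hs => (adm.low s hs).trans_eq (hLS s hs).symm)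
    (fun s hs => (hLS s hs).trans_le (hup s hs))
  refine ⟨F, hprob, hF0, hm, hi2, fun s hs => ?_⟩
  have hσ : sigmaT F FT μ s = sigmaFun FT μ φ s :=
    integral_congr_ae (hT.mono fun t ht => by simp only [hLS _ (mul_nonneg ht hs)])
  rw [hσ, hLS s hs, ← hfix s hs]
  rfl

theorem Cond.sol_unique [IsProbabilityMeasure FT] [IsProbabilityMeasure FA] (h : Cond FT FA)
    (hμ : 0 < μ) (hT : ∀ᵐ t ∂FT, 0 ≤ t) (hA : ∀ᵐ a ∂FA, 0 ≤ a) {G : Measure ℝ}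
    (hF : Sol FT FA μ F) (hG : Sol FT FA μ G) : F = G := by
  have hFi := hF.integrable_id hμ
  have hGi := hG.integrable_id hμ
  obtain ⟨_, hF0, hFm, hF2, hFe⟩ := hF
  obtain ⟨_, hG0, hGm, hG2, hGe⟩ := hG
  have hFn := ae_nonneg_of_Iio hF0
  have hGn := ae_nonneg_of_Iio hG0
  refine eq_of_LS_eq hF0 hG0 fun s hs => ?_
  refine fixedPoint_unique (C := (∫ x, x ^ 2 ∂F) / 2 + (∫ x, x ^ 2 ∂G) / 2) hμ.le
    (admissible_LS hFn hFi hFm) (admissible_LS hGn hGi hGm) hT hA (h.integrable_T hT)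
    (h.integral_T_lt hT) (h.integrable_A hA) (h.integral_A hA) (fun r hr => (hFe r hr).symm)
    (fun r hr => (hGe r hr).symm) (fun r hr => ?_) hs
  have f1 := LS_low hFn hFi hFm hr
  have f2 := LS_up hFn hFi hFm hF2 hr
  have g1 := LS_low hGn hGi hGm hr
  have g2 := LS_up hGn hGi hGm hG2 hr
  have f0 : 0 ≤ (∫ x, x ^ 2 ∂F) / 2 * r ^ 2 :=
    mul_nonneg (div_nonneg (integral_nonneg fun x => sq_nonneg x) two_pos.le) (sq_nonneg r)
  have g0 : 0 ≤ (∫ x, x ^ 2 ∂G) / 2 * r ^ 2 :=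
    mul_nonneg (div_nonneg (integral_nonneg fun x => sq_nonneg x) two_pos.le) (sq_nonneg r)
  rw [abs_le]
  constructor <;> linarith

/-- The existence of a solution alone forces the moment conditions. -/
theorem Sol.cond [IsProbabilityMeasure FT] [IsProbabilityMeasure FA] (hμ : 0 < μ)
    (hT : ∀ᵐ t ∂FT, 0 ≤ t) (hA : ∀ᵐ a ∂FA, 0 ≤ a) (h : Sol FT FA μ F) : Cond FT FA := by
  obtain ⟨h1, h2⟩ := h.moment_equations hμ hT hA
  have hm2 := h.integral_sq_pos hμ
  set M := ENNReal.ofReal ((∫ x, x ^ 2 ∂F) / 2)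
  have hM0 : M ≠ 0 := by simpa [M] using hm2
  have hMt : M ≠ ⊤ := ENNReal.ofReal_ne_top
  have hμ0 : ENNReal.ofReal (μ ^ 2) ≠ 0 := by simpa using hμ.ne'
  set τ := ∫⁻ t, ENNReal.ofReal t ∂FT
  set α := ∫⁻ a, ENNReal.ofReal (a ^ 2 / 2) ∂FA with hα
  have hαt : α ≠ ⊤ := by
    intro hc
    rw [hc, ENNReal.mul_top hμ0, add_top] at h2
    exact hMt h2
  -- `A` is not a.s. zero because its mean is `1`
  have hα0 : α ≠ 0 := by
    intro hc
    rw [hα, lintegral_eq_zero_iff (by fun_prop)] at hc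
    have : ∫⁻ a, ENNReal.ofReal a ∂FA = 0 := by
      rw [lintegral_eq_zero_iff (by fun_prop)]
      filter_upwards [hc] with a ha
      simp only [Pi.zero_apply, ENNReal.ofReal_eq_zero] at ha ⊢
      nlinarith
    simp [this] at h1
  have hτM : τ * M < 1 * M := by
    rw [one_mul]
    have hne : τ * M ≠ ⊤ := by
      intro hc
      rw [hc, top_add] at h2
      exact hMt h2
    conv_rhs => rw [h2]
    exact ENNReal.lt_add_right hne (mul_ne_zero hμ0 hα0)
  refine ⟨lt_of_mul_lt_mul_right' hτM, h1, ?_⟩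
  have h2α : ∫⁻ a, ENNReal.ofReal (a ^ 2) ∂FA = 2 * α := by
    rw [hα, ← lintegral_const_mul _ (by fun_prop)]
    refine lintegral_congr fun a => ?_
    rw [show (2 : ENNReal) = ENNReal.ofReal 2 by simp, ← ENNReal.ofReal_mul two_pos.le]
    congr 1
    ring
  rw [h2α]
  exact ENNReal.mul_lt_top (by simp) hαt.lt_top

theorem Cond.variance [IsProbabilityMeasure FT] [IsProbabilityMeasure FA] (h : Cond FT FA)
    (hμ : 0 < μ) (hT : ∀ᵐ t ∂FT, 0 ≤ t) (hA : ∀ᵐ a ∂FA, 0 ≤ a) (hF : Sol FT FA μ F) :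
    (∫ x, x ^ 2 ∂F) - (∫ x, x ∂F) ^ 2 =
      (((∫ a, a ^ 2 ∂FA) - (∫ a, a ∂FA) ^ 2) + (∫ t, t ∂FT)) / (1 - (∫ t, t ∂FT)) * μ ^ 2 := by
  have h2 := (hF.moment_equations hμ hT hA).2
  have hm2 := hF.integral_sq_pos hμ
  have hT0 : 0 ≤ ∫ t, t ∂FT := integral_nonneg_of_ae hT
  have hT1 := h.integral_T_lt hT
  have hA20 : 0 ≤ ∫ a, a ^ 2 ∂FA := integral_nonneg fun a => sq_nonneg a
  rw [← ofReal_integral_eq_lintegral_ofReal (h.integrable_T hT) hT,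
    ← ofReal_integral_eq_lintegral_ofReal (h.integrable_A_sq.div_const 2)
      (.of_forall fun a => by positivity), integral_div, ← ENNReal.ofReal_mul hT0,
    ← ENNReal.ofReal_mul (sq_nonneg μ), ← ENNReal.ofReal_add (by positivity) (by positivity),
    ENNReal.ofReal_eq_ofReal_iff (by positivity) (by positivity)] at h2
  rw [h.integral_A hA, hF.2.2.1]
  have : 1 - ∫ t, t ∂FT ≠ 0 := (sub_pos.2 hT1).ne'
  field_simp
  linarith

end

end

/-- Corollary 1: the moment conditions hold iff the power-mixture functional equation has
exactly one solution with mean `μ` and finite second moment; moreover, the solution has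
variance `((Var[A] + E[T])/(1 − E[T])) μ²`. -/
theorem stmt1 (μ : ℝ) (hμ : 0 < μ) (FT FA : Measure ℝ)
    [IsProbabilityMeasure FT] [IsProbabilityMeasure FA]
    (hT : FT (Set.Iio 0) = 0) (hA : FA (Set.Iio 0) = 0) :
    (Cond FT FA ↔ (∃! F : Measure ℝ, Sol FT FA μ F)) ∧
    (Cond FT FA → ∀ F : Measure ℝ, Sol FT FA μ F →
      (∫ x, x ^ 2 ∂F) - (∫ x, x ∂F) ^ 2 =
        (((∫ a, a ^ 2 ∂FA) - (∫ a, a ∂FA) ^ 2) + (∫ t, t ∂FT)) /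
          (1 - (∫ t, t ∂FT)) * μ ^ 2) := by
  have hT' := ae_nonneg_of_Iio hT
  have hA' := ae_nonneg_of_Iio hA
  refine ⟨⟨fun h => ?_, fun ⟨_, hF, _⟩ => hF.cond hμ hT' hA'⟩,
    fun h F hF => h.variance hμ hT' hA' hF⟩
  obtain ⟨F, hF⟩ := h.exists_sol hμ hT' hA'
  exact ⟨F, hF, fun G hG => h.sol_unique hμ hT' hA' hG hF⟩
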